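/- A connected signed graph Σ is balanced if and only if L^max(Σ) = L^min(Σ) and det L^max(Σ) = 0 (i.e., the common matrix L^±(Σ) exists and has determinant 0). -/

import Mathlib

/-!
The signature of a balanced connected signed graph is a coboundary: `σ(P) = θ(u) θ(v)` for every walk `P`
from `u` to `v`, with `θ : V → {±1}`. To see this, one shows that passing from a walk to its bypass
(cutting out closed detours) preserves the sign (`walkSign_bypass`), because each detour is either a
cycle or an edge traversed back and forth; hence closed walks are positive, and `θ v` can be taken to
be the sign of any walk from a fixed root to `v`. Then `σ_max(u,v) = σ_min(u,v) = θ(u) θ(v)` and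
`L^max θ = 0`, which gives one direction.

Conversely, if `L^max x = 0` with `x ≠ 0`, the identity
`∑_{u,v} d(u,v) (x_u - σ_max(u,v) x_v)² = 2 xᵀ L^max x = 0` forces `x_u = σ_max(u,v) x_v` for all
`u ≠ v`, and in particular `x_u = σ(uv) x_v` along every edge. Thus `x_u = σ(P) x_v` for every walk
`P`; by connectedness `x` vanishes nowhere, so every closed walk is positive.
-/

open Classical

noncomputable section

/-- `σ_max(u,v)`: the maximum of `σ(P)` over all shortest `uv`-paths `P`; it is `-1`
exactly when all shortest `uv`-paths are negative. -/
def sigmaMax {V : Type*} (G : SimpleGraph V) (σ : Sym2 V → ℝ) (u v : V) : ℝ :=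
  if ∃ p : G.Walk u v, p.IsPath ∧ p.length = G.dist u v ∧ (p.edges.map σ).prod = 1
  then 1 else -1

/-- `σ_min(u,v)`: the minimum of `σ(P)` over all shortest `uv`-paths `P`; it is `+1`
exactly when all shortest `uv`-paths are positive. -/
def sigmaMin {V : Type*} (G : SimpleGraph V) (σ : Sym2 V → ℝ) (u v : V) : ℝ :=
  if ∃ p : G.Walk u v, p.IsPath ∧ p.length = G.dist u v ∧ (p.edges.map σ).prod = -1
  then -1 else 1

/-- The max-signed distance matrix `D^max(Σ) = (σ_max(u,v) d(u,v))`. -/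
def distMax {V : Type*} [Fintype V] (G : SimpleGraph V) (σ : Sym2 V → ℝ) :
    Matrix V V ℝ :=
  Matrix.of fun u v => sigmaMax G σ u v * (G.dist u v : ℝ)

/-- The min-signed distance matrix `D^min(Σ) = (σ_min(u,v) d(u,v))`. -/
def distMin {V : Type*} [Fintype V] (G : SimpleGraph V) (σ : Sym2 V → ℝ) :
    Matrix V V ℝ :=
  Matrix.of fun u v => sigmaMin G σ u v * (G.dist u v : ℝ)

/-- The diagonal matrix `Tr(G)` of transmissions `Tr(v) = ∑_u d(v,u)`. -/
def transMat {V : Type*} [Fintype V] [DecidableEq V] (G : SimpleGraph V) :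
    Matrix V V ℝ :=
  Matrix.diagonal fun v => ((∑ u, G.dist v u : ℕ) : ℝ)

/-- The max-signed distance Laplacian `L^max(Σ) = Tr(G) - D^max(Σ)`. -/
def lapMax {V : Type*} [Fintype V] [DecidableEq V] (G : SimpleGraph V)
    (σ : Sym2 V → ℝ) : Matrix V V ℝ :=
  transMat G - distMax G σ

/-- The min-signed distance Laplacian `L^min(Σ) = Tr(G) - D^min(Σ)`. -/
def lapMin {V : Type*} [Fintype V] [DecidableEq V] (G : SimpleGraph V)
    (σ : Sym2 V → ℝ) : Matrix V V ℝ :=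
  transMat G - distMin G σ

/-- The sign of a walk: the product of the signs of its edges. -/
def walkSign {V : Type*} {G : SimpleGraph V} (σ : Sym2 V → ℝ) {u v : V} (p : G.Walk u v) : ℝ :=
  (p.edges.map σ).prod

section

variable {V : Type*} {G : SimpleGraph V} {σ : Sym2 V → ℝ}

lemma walkSign_nil (u : V) : walkSign σ (SimpleGraph.Walk.nil : G.Walk u u) = 1 := by
  simp [walkSign]

lemma walkSign_cons {u v w : V} (h : G.Adj u v) (p : G.Walk v w) :
    walkSign σ (SimpleGraph.Walk.cons h p) = σ s(u, v) * walkSign σ p := by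
  simp [walkSign]

lemma walkSign_append {u v w : V} (p : G.Walk u v) (q : G.Walk v w) :
    walkSign σ (p.append q) = walkSign σ p * walkSign σ q := by
  simp [walkSign]

lemma walkSign_reverse {u v : V} (p : G.Walk u v) :
    walkSign σ p.reverse = walkSign σ p := by
  simp [walkSign]

lemma walkSign_eq_one_or (hσ : ∀ e ∈ G.edgeSet, σ e = 1 ∨ σ e = -1) {u v : V}
    (p : G.Walk u v) : walkSign σ p = 1 ∨ walkSign σ p = -1 := by
  induction p with
  | nil => left; exact walkSign_nil _
  | cons h p ih =>
    rw [walkSign_cons]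
    rcases hσ _ (G.mem_edgeSet.2 h) with h1 | h1 <;> rcases ih with h2 | h2 <;> simp [h1, h2]

/-- A path from `v` to `u` that uses the edge `uv` consists of that edge only. -/
lemma edges_eq_of_mem {u v : V} (p : G.Walk v u) (hp : p.IsPath)
    (he : s(u, v) ∈ p.edges) : p.edges = [s(u, v)] := by
  cases p with
  | nil => simp at he
  | cons h q =>
    rw [SimpleGraph.Walk.cons_isPath_iff] at hp
    rw [SimpleGraph.Walk.edges_cons, List.mem_cons] at he
    rcases he with he | he
    · rw [Sym2.eq_swap, Sym2.congr_right] at he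
      subst he
      have hq : q = SimpleGraph.Walk.nil :=
        SimpleGraph.Walk.eq_nil_iff_nil.2 (SimpleGraph.Walk.isPath_iff_nil.1 hp.1)
      subst hq
      simp [Sym2.eq_swap]
    · exact absurd (q.snd_mem_support_of_mem_edges he) hp.2

/-- Closing a path by an edge gives a cycle or a doubled edge, so a positive closed walk when all
cycles are positive. -/
lemma walkSign_cons_path (hσ : ∀ e ∈ G.edgeSet, σ e = 1 ∨ σ e = -1)
    (hb : ∀ (u : V) (c : G.Walk u u), c.IsCycle → walkSign σ c = 1)
    {u v : V} (h : G.Adj u v) (p : G.Walk v u) (hp : p.IsPath) :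
    σ s(u, v) * walkSign σ p = 1 := by
  by_cases he : s(u, v) ∈ p.edges
  · rw [walkSign, edges_eq_of_mem p hp he]
    rcases hσ _ (G.mem_edgeSet.2 h) with h1 | h1 <;> simp [h1]
  · rw [← walkSign_cons h]
    exact hb u _ ((SimpleGraph.Walk.cons_isCycle_iff p h).2 ⟨hp, he⟩)

lemma walkSign_bypass (hσ : ∀ e ∈ G.edgeSet, σ e = 1 ∨ σ e = -1)
    (hb : ∀ (u : V) (c : G.Walk u u), c.IsCycle → walkSign σ c = 1)
    {u v : V} (p : G.Walk u v) : walkSign σ p.bypass = walkSign σ p := by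
  induction p with
  | nil => rfl
  | cons h p ih =>
    rw [walkSign_cons, ← ih, SimpleGraph.Walk.bypass]
    split_ifs with hs
    · have key := walkSign_cons_path hσ hb h (p.bypass.takeUntil _ hs)
        (p.bypass_isPath.takeUntil hs)
      conv_rhs => rw [← p.bypass.take_spec hs]
      rw [walkSign_append, ← mul_assoc, key, one_mul]
    · rw [walkSign_cons]

lemma walkSign_closed (hσ : ∀ e ∈ G.edgeSet, σ e = 1 ∨ σ e = -1)
    (hb : ∀ (u : V) (c : G.Walk u u), c.IsCycle → walkSign σ c = 1)
    {u : V} (p : G.Walk u u) : walkSign σ p = 1 := by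
  rw [← walkSign_bypass hσ hb,
    SimpleGraph.Walk.eq_nil_iff_nil.2 (SimpleGraph.Walk.isPath_iff_nil.1 p.bypass_isPath),
    walkSign_nil]

/-- A balanced connected signed graph is switching equivalent to the all-positive one. -/
lemma exists_potential (hσ : ∀ e ∈ G.edgeSet, σ e = 1 ∨ σ e = -1) (hconn : G.Connected)
    (hb : ∀ (u : V) (c : G.Walk u u), c.IsCycle → walkSign σ c = 1) :
    ∃ θ : V → ℝ, (∀ v, θ v = 1 ∨ θ v = -1) ∧
      ∀ (u v : V) (p : G.Walk u v), walkSign σ p = θ u * θ v := by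
  obtain ⟨r⟩ := hconn.nonempty
  let w : ∀ v, G.Walk r v := fun v => (hconn.preconnected r v).some
  refine ⟨fun v => walkSign σ (w v), fun v => walkSign_eq_one_or hσ _, fun u v p => ?_⟩
  change walkSign σ p = walkSign σ (w u) * walkSign σ (w v)
  have h := walkSign_closed hσ hb (((w u).append p).append (w v).reverse)
  rw [walkSign_append, walkSign_append, walkSign_reverse] at h
  rcases walkSign_eq_one_or hσ (w u) with h1 | h1 <;>
  rcases walkSign_eq_one_or hσ (w v) with h2 | h2 <;>
  rw [h1, h2] at h ⊢ <;> linarith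

lemma sigmaMax_eq_of_potential (hconn : G.Connected) {θ : V → ℝ}
    (h1 : ∀ v, θ v = 1 ∨ θ v = -1)
    (h2 : ∀ (u v : V) (p : G.Walk u v), walkSign σ p = θ u * θ v) (u v : V) :
    sigmaMax G σ u v = θ u * θ v := by
  obtain ⟨p, hp, hl⟩ := hconn.exists_path_of_dist u v
  have h2' : ∀ p : G.Walk u v, (p.edges.map σ).prod = θ u * θ v := h2 u v
  have h3 : θ u * θ v = 1 ∨ θ u * θ v = -1 := by
    rcases h1 u with h | h <;> rcases h1 v with h' | h' <;> simp [h, h']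
  unfold sigmaMax
  rcases h3 with h3 | h3
  · rw [if_pos ⟨p, hp, hl, by rw [h2', h3]⟩, h3]
  · rw [if_neg, h3]
    rintro ⟨q, -, -, hq⟩
    rw [h2', h3] at hq
    norm_num at hq

lemma sigmaMin_eq_of_potential (hconn : G.Connected) {θ : V → ℝ}
    (h1 : ∀ v, θ v = 1 ∨ θ v = -1)
    (h2 : ∀ (u v : V) (p : G.Walk u v), walkSign σ p = θ u * θ v) (u v : V) :
    sigmaMin G σ u v = θ u * θ v := by
  obtain ⟨p, hp, hl⟩ := hconn.exists_path_of_dist u v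
  have h2' : ∀ p : G.Walk u v, (p.edges.map σ).prod = θ u * θ v := h2 u v
  have h3 : θ u * θ v = 1 ∨ θ u * θ v = -1 := by
    rcases h1 u with h | h <;> rcases h1 v with h' | h' <;> simp [h, h']
  unfold sigmaMin
  rcases h3 with h3 | h3
  · rw [if_neg, h3]
    rintro ⟨q, -, -, hq⟩
    rw [h2', h3] at hq
    norm_num at hq
  · rw [if_pos ⟨p, hp, hl, by rw [h2', h3]⟩, h3]

/-- The edge `uv` is the only shortest path between its ends. -/
lemma sigmaMax_eq_of_adj (hσ : ∀ e ∈ G.edgeSet, σ e = 1 ∨ σ e = -1) {u v : V}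
    (h : G.Adj u v) : sigmaMax G σ u v = σ s(u, v) := by
  have hd : G.dist u v = 1 := SimpleGraph.dist_eq_one_iff_adj.2 h
  have hp : (SimpleGraph.Walk.cons h SimpleGraph.Walk.nil).IsPath := by
    simp [SimpleGraph.Walk.cons_isPath_iff, h.ne]
  unfold sigmaMax
  rcases hσ _ (G.mem_edgeSet.2 h) with h1 | h1
  · rw [if_pos ⟨_, hp, by simp [hd], by simp [h1]⟩, h1]
  · rw [if_neg, h1]
    rintro ⟨q, -, hl, hq⟩
    rw [hd] at hl
    cases q with
    | nil => simp at hl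
    | cons h' q =>
      cases q with
      | nil => simp [h1] at hq; norm_num at hq
      | cons h'' q => simp at hl

lemma lapMax_mulVec [Fintype V] [DecidableEq V] (x : V → ℝ) (u : V) :
    (lapMax G σ).mulVec x u =
      ∑ v, (G.dist u v : ℝ) * (x u - sigmaMax G σ u v * x v) := by
  rw [lapMax, Matrix.sub_mulVec, Pi.sub_apply, transMat, Matrix.mulVec_diagonal]
  simp only [Matrix.mulVec, dotProduct, distMax, Matrix.of_apply]
  rw [Nat.cast_sum, Finset.sum_mul, ← Finset.sum_sub_distrib]
  exact Finset.sum_congr rfl fun v _ => by ring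

lemma sum_sq_eq [Fintype V] [DecidableEq V] (x : V → ℝ) :
    ∑ u, ∑ v, (G.dist u v : ℝ) * (x u - sigmaMax G σ u v * x v) ^ 2 =
      2 * ∑ u, x u * (lapMax G σ).mulVec x u := by
  have hs : ∀ u v, sigmaMax G σ u v ^ 2 = 1 := fun u v => by
    unfold sigmaMax; split_ifs <;> norm_num
  -- The only symmetry needed is that of the distance, to exchange `x_u²` and `x_v²`.
  have hsymm : ∑ u, ∑ v, (G.dist u v : ℝ) * x v ^ 2 =
      ∑ u, ∑ v, (G.dist u v : ℝ) * x u ^ 2 := by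
    rw [Finset.sum_comm]
    simp only [SimpleGraph.dist_comm]
  have h1 : ∑ u, ∑ v, (G.dist u v : ℝ) * (x u - sigmaMax G σ u v * x v) ^ 2 =
      ∑ u, ∑ v, (2 * (x u * ((G.dist u v : ℝ) * (x u - sigmaMax G σ u v * x v)))) +
      (∑ u, ∑ v, (G.dist u v : ℝ) * x v ^ 2 - ∑ u, ∑ v, (G.dist u v : ℝ) * x u ^ 2) := by
    simp only [← Finset.sum_sub_distrib, ← Finset.sum_add_distrib]
    refine Finset.sum_congr rfl fun u _ => Finset.sum_congr rfl fun v _ => ?_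
    linear_combination (G.dist u v : ℝ) * x v ^ 2 * hs u v
  rw [h1, hsymm, sub_self, add_zero]
  simp only [lapMax_mulVec, Finset.mul_sum]

lemma eq_of_lapMax_mulVec_eq_zero [Fintype V] [DecidableEq V]
    (hσ : ∀ e ∈ G.edgeSet, σ e = 1 ∨ σ e = -1) {x : V → ℝ}
    (hx : (lapMax G σ).mulVec x = 0) {u v : V} (h : G.Adj u v) :
    x u = σ s(u, v) * x v := by
  have h0 := sum_sq_eq (G := G) (σ := σ) x
  simp only [hx, Pi.zero_apply, mul_zero, Finset.sum_const_zero] at h0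
  have hnn : ∀ u v, 0 ≤ (G.dist u v : ℝ) * (x u - sigmaMax G σ u v * x v) ^ 2 :=
    fun u v => by positivity
  rw [Finset.sum_eq_zero_iff_of_nonneg fun u _ => Finset.sum_nonneg fun v _ => hnn u v] at h0
  have h2 := h0 u (Finset.mem_univ u)
  rw [Finset.sum_eq_zero_iff_of_nonneg fun v _ => hnn u v] at h2
  have h3 := h2 v (Finset.mem_univ v)
  rw [SimpleGraph.dist_eq_one_iff_adj.2 h, sigmaMax_eq_of_adj hσ h, Nat.cast_one, one_mul] at h3
  exact sub_eq_zero.1 (pow_eq_zero_iff two_ne_zero |>.1 h3)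

end

/-- A connected signed graph `Σ` is balanced if and only if
`L^max(Σ) = L^min(Σ)` and `det L^max(Σ) = 0` (i.e. the common matrix `L^±(Σ)` exists
and has determinant `0`). -/
theorem balanced_iff_lapMax_eq_lapMin_and_det_eq_zero
    {V : Type*} [Fintype V] [DecidableEq V] (G : SimpleGraph V)
    (σ : Sym2 V → ℝ)
    (hσ : ∀ e ∈ G.edgeSet, σ e = 1 ∨ σ e = -1)
    (hconn : G.Connected) :
    (∀ (u : V) (c : G.Walk u u), c.IsCycle → (c.edges.map σ).prod = 1) ↔
      (lapMax G σ = lapMin G σ ∧ (lapMax G σ).det = 0) := by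
  change (∀ (u : V) (c : G.Walk u u), c.IsCycle → walkSign σ c = 1) ↔ _
  constructor
  · intro hb
    obtain ⟨θ, h1, h2⟩ := exists_potential hσ hconn hb
    have hM := sigmaMax_eq_of_potential hconn h1 h2
    refine ⟨?_, ?_⟩
    · simp only [lapMax, lapMin, distMax, distMin, hM, sigmaMin_eq_of_potential hconn h1 h2]
    · refine Matrix.exists_mulVec_eq_zero_iff.1 ⟨θ, fun h => ?_, ?_⟩
      · obtain ⟨r⟩ := hconn.nonempty
        rcases h1 r with h' | h' <;> simp [h] at h'
      · funext u
        rw [lapMax_mulVec]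
        refine Finset.sum_eq_zero fun v _ => ?_
        rw [hM]
        rcases h1 v with h | h <;> simp [h]
  · rintro ⟨-, hdet⟩ u c -
    obtain ⟨x, hx0, hx⟩ := Matrix.exists_mulVec_eq_zero_iff.2 hdet
    have hw : ∀ (u v : V) (p : G.Walk u v), x u = walkSign σ p * x v := by
      intro u v p
      induction p with
      | nil => rw [walkSign_nil, one_mul]
      | cons h p ih => rw [walkSign_cons, mul_assoc, ← ih, eq_of_lapMax_mulVec_eq_zero hσ hx h]
    have hu : x u ≠ 0 := fun h => hx0 <| funext fun v => by
      obtain ⟨p⟩ := hconn.preconnected v u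
      rw [hw v u p, h, mul_zero, Pi.zero_apply]
    exact mul_right_cancel₀ hu (by rw [← hw u u c, one_mul])
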